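/- Let K be a totally real number field of degree n with canonical embedding σ : K → ℝⁿ, and let F ⊂ ℝⁿ be a measurable fundamental domain for the lattice σ(O_K). Then for every nonzero q ∈ O_K and every r > 0, the Lebesgue measure of the set { H ∈ F : ∃ a ∈ O_K, ‖H − σ(a/q)‖ < r } is at most V_n·rⁿ·|Nr(q)|, where V_n is the volume of the n-dimensional unit ball. -/

import Mathlib

/-!
The set is covered by the pieces `F ∩ (B + σ(a/q))`, where `B` is the open Euclidean ball of
radius `r` about `0` and `a` runs over `𝓞 K`. Writing `a = c + q v` with `c` a representative of
a class modulo `q`, the centre `σ(a/q)` is the translate of `σ(c/q)` by the lattice vector `σ(v)`.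
For fixed `c`, translating the piece by `-σ(v)` moves it into `B + σ(c/q)`, and the sets so
obtained for different `v` are disjoint because the translates of `F` are
(`tsum_volume_inter_translate_le`). Each class therefore contributes at most `volume B = V_n rⁿ`
(`volume_euclidean_ball`), and there are `|𝓞 K ⧸ (q)| = |Nr(q)|` classes
(`card_quotient_span_singleton`).
-/

set_option synthInstance.maxHeartbeats 1000000
set_option maxHeartbeats 1000000

open NumberField MeasureTheory

/-- Folding a set `B` into a set `F` whose translates by `φ g` are pairwise disjoint does not
increase its total measure. -/
theorem tsum_volume_inter_translate_le {n : ℕ} {G : Type*} [AddCommGroup G] [Countable G]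
    (φ : G →+ (Fin n → ℝ)) (F B : Set (Fin n → ℝ)) (hF : MeasurableSet F)
    (hB : MeasurableSet B)
    (huniq : ∀ x : Fin n → ℝ, ∀ g h : G, x - φ g ∈ F → x - φ h ∈ F → g = h) :
    ∑' g : G, volume (F ∩ {H | H - φ g ∈ B}) ≤ volume B := by
  have key : ∀ g : G, volume (F ∩ {H | H - φ g ∈ B}) = volume ({x | x + φ g ∈ F} ∩ B) := by
    intro g
    rw [← measure_preimage_add_right volume (φ g)]
    congr 1
    ext x
    simp
  simp_rw [key]
  rw [← measure_iUnion]
  · exact measure_mono (Set.iUnion_subset fun g => Set.inter_subset_right)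
  · intro g h hgh
    refine Set.disjoint_left.2 fun x hx hy => hgh ?_
    have := huniq x (-g) (-h) (by simpa using hx.1) (by simpa using hy.1)
    exact neg_injective this
  · intro g
    exact ((measurable_add_const (φ g)) hF).inter hB

theorem measurableSet_euclidean_ball (n : ℕ) (r : ℝ) :
    MeasurableSet {H : Fin n → ℝ | Real.sqrt (∑ i, (H i) ^ 2) < r} :=
  measurableSet_lt (by fun_prop) measurable_const

theorem volume_euclidean_ball (n : ℕ) (r : ℝ) (hr : 0 < r) :
    volume {H : Fin n → ℝ | Real.sqrt (∑ i, (H i) ^ 2) < r} =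
      ENNReal.ofReal ((volume (Metric.ball (0 : EuclideanSpace ℝ (Fin n)) 1)).toReal * r ^ n) := by
  have h1 : volume {H : Fin n → ℝ | Real.sqrt (∑ i, (H i) ^ 2) < r} =
      volume (Metric.ball (0 : EuclideanSpace ℝ (Fin n)) r) := by
    rw [← (EuclideanSpace.volume_preserving_symm_measurableEquiv_toLp (Fin n)).measure_preimage
      (measurableSet_euclidean_ball n r).nullMeasurableSet]
    congr 1
    ext x
    simp [EuclideanSpace.norm_eq]
  rw [h1, Measure.addHaar_ball_of_pos _ _ hr, finrank_euclideanSpace_fin,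
    mul_comm (ENNReal.toReal _), ENNReal.ofReal_mul (by positivity),
    ENNReal.ofReal_toReal measure_ball_lt_top.ne]

/-- The ideal `(q)` has index `|Nr(q)|`. -/
theorem card_quotient_span_singleton (K : Type*) [Field K] [NumberField K] (q : 𝓞 K) :
    Nat.card (𝓞 K ⧸ Ideal.span {q}) = (Algebra.norm ℤ q).natAbs := by
  rw [← Submodule.cardQuot_apply, ← Ideal.absNorm_apply, Ideal.absNorm_span_singleton]

/-- (Measure bound on the approximation set, Eq. (66).)  Let `F ⊂ ℝⁿ` be a
measurable fundamental domain for the lattice `σ(𝓞 K)`.  Then for every nonzero `q ∈ 𝓞 K`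
and every `r > 0`, the Lebesgue measure of `{H ∈ F : ∃ a ∈ 𝓞 K, ‖H − σ(a/q)‖ < r}` is at
most `V_n · rⁿ · |Nr(q)|`, where `V_n` is the volume of the `n`-dimensional unit ball. -/
theorem measure_of_approximation_set_le
    (K : Type*) [Field K] [NumberField K] (n : ℕ)
    (hn : Module.finrank ℚ K = n)
    (σ : Fin n → (K →+* ℝ)) (hσ : Function.Injective σ)
    (F : Set (Fin n → ℝ)) (hFmeas : MeasurableSet F)
    (hF : ∀ x : Fin n → ℝ, ∃! v : 𝓞 K,
      (fun i => x i - σ i (algebraMap (𝓞 K) K v)) ∈ F)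
    (q : 𝓞 K) (hq : q ≠ 0) (r : ℝ) (hr : 0 < r) :
    volume {H : Fin n → ℝ | H ∈ F ∧ ∃ a : 𝓞 K,
        Real.sqrt (∑ i,
            (H i - σ i (algebraMap (𝓞 K) K a / algebraMap (𝓞 K) K q))^2) < r}
      ≤ ENNReal.ofReal
          ((volume (Metric.ball (0 : EuclideanSpace ℝ (Fin n)) 1)).toReal
            * r ^ n * ((Algebra.norm ℤ q).natAbs : ℝ)) := by
  have hqK : algebraMap (𝓞 K) K q ≠ 0 := by simpa using hq
  have : Countable (𝓞 K) :=
    (Module.Free.chooseBasis ℤ (𝓞 K)).equivFun.toEquiv.countable_iff.2 inferInstance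
  have : Finite (𝓞 K ⧸ Ideal.span {q}) := by
    apply Nat.finite_of_card_ne_zero
    rw [card_quotient_span_singleton]
    simpa [Algebra.norm_eq_zero_iff] using hq
  have := Fintype.ofFinite (𝓞 K ⧸ Ideal.span {q})
  let φ : 𝓞 K →+ (Fin n → ℝ) :=
    { toFun := fun v i => σ i (algebraMap (𝓞 K) K v)
      map_zero' := by ext i; simp
      map_add' := fun x y => by ext i; simp }
  let ξ : (𝓞 K ⧸ Ideal.span {q}) → Fin n → ℝ := fun c i =>
    σ i (algebraMap (𝓞 K) K (Quotient.out c) / algebraMap (𝓞 K) K q)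
  let B₀ : Set (Fin n → ℝ) := {H | Real.sqrt (∑ i, (H i) ^ 2) < r}
  let B : (𝓞 K ⧸ Ideal.span {q}) → Set (Fin n → ℝ) := fun c => {H | H - ξ c ∈ B₀}
  have hB₀ : MeasurableSet B₀ := measurableSet_euclidean_ball n r
  have hB : ∀ c, MeasurableSet (B c) := fun c => (measurable_sub_const (ξ c)) hB₀
  have hBvol : ∀ c, volume (B c) = volume B₀ := fun c => by
    rw [← measure_preimage_add_right volume (-ξ c) B₀]
    simp only [B, sub_eq_add_neg, Set.preimage]
  have hcover : {H : Fin n → ℝ | H ∈ F ∧ ∃ a : 𝓞 K,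
        Real.sqrt (∑ i,
            (H i - σ i (algebraMap (𝓞 K) K a / algebraMap (𝓞 K) K q))^2) < r} ⊆
      ⋃ c, ⋃ v : 𝓞 K, F ∩ {H | H - φ v ∈ B c} := by
    rintro H ⟨hHF, a, ha⟩
    let c : 𝓞 K ⧸ Ideal.span {q} := Ideal.Quotient.mk _ a
    have hc : Ideal.Quotient.mk (Ideal.span {q}) a =
        Ideal.Quotient.mk (Ideal.span {q}) (Quotient.out c) := (Quotient.out_eq c).symm
    obtain ⟨v, hv⟩ := Ideal.mem_span_singleton'.1 (Ideal.Quotient.eq.1 hc)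
    refine Set.mem_iUnion₂.2 ⟨c, v, hHF, ?_⟩
    have hdiv : algebraMap (𝓞 K) K a / algebraMap (𝓞 K) K q =
        algebraMap (𝓞 K) K v +
          algebraMap (𝓞 K) K (Quotient.out c) / algebraMap (𝓞 K) K q := by
      have : a = v * q + Quotient.out c := by rw [hv]; ring
      have h2 := congrArg (algebraMap (𝓞 K) K) this
      rw [map_add, map_mul] at h2
      rw [h2]
      field_simp
    have hi : ∀ i, (H - φ v - ξ c) i =
        H i - σ i (algebraMap (𝓞 K) K a / algebraMap (𝓞 K) K q) := by
      intro i
      rw [hdiv, map_add]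
      exact sub_sub _ _ _
    change Real.sqrt (∑ i, ((H - φ v - ξ c) i) ^ 2) < r
    simpa only [hi] using ha
  calc _ ≤ volume (⋃ c, ⋃ v : 𝓞 K, F ∩ {H | H - φ v ∈ B c}) := measure_mono hcover
    _ ≤ ∑ c, volume (⋃ v : 𝓞 K, F ∩ {H | H - φ v ∈ B c}) := measure_iUnion_fintype_le _ _
    _ ≤ ∑ c, volume B₀ := Finset.sum_le_sum fun c _ =>
        (measure_iUnion_le _).trans <|
          (tsum_volume_inter_translate_le φ F (B c) hFmeas (hB c)
            fun x g h hg hh => (hF x).unique hg hh).trans_eq (hBvol c)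
    _ = _ := by
      rw [Finset.sum_const, Finset.card_univ, ← Nat.card_eq_fintype_card,
        card_quotient_span_singleton, volume_euclidean_ball n r hr, nsmul_eq_mul, mul_comm,
        ENNReal.ofReal_mul (by positivity : (0:ℝ) ≤ (volume (Metric.ball
          (0 : EuclideanSpace ℝ (Fin n)) 1)).toReal * r ^ n), ENNReal.ofReal_natCast]
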